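/- Let G be a hyperbolic group and let K be a subgroup of G which is not a torsion group (K contains an element of infinite order). Then the centralizer Z_G(K) = {g ∈ G | ∀ k ∈ K, g k = k g} is virtually cyclic: Z_G(K) contains a cyclic subgroup of finite index. -/

import Mathlib

/-- The word metric on a group `G` with respect to a generating set `S`:
`wordDist S g h` is the least length of a word in `S ∪ S⁻¹` representing `g⁻¹ * h`. -/
noncomputable def wordDist {G : Type*} [Group G] (S : Set G) (g h : G) : ℝ :=
  sInf {r : ℝ | ∃ l : List G, (∀ x ∈ l, x ∈ S ∨ x⁻¹ ∈ S) ∧ l.prod = g⁻¹ * h ∧ r = l.length}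

/-- The Gromov product `(x|y)_w` with respect to the word metric for `S`. -/
noncomputable def gromovProd {G : Type*} [Group G] (S : Set G) (w x y : G) : ℝ :=
  (wordDist S x w + wordDist S y w - wordDist S x y) / 2

/-- A group is (Gromov) hyperbolic if it admits a finite generating set `S` such that
the word metric `d_S` satisfies the Gromov product four-point condition for some `δ ≥ 0`. -/
def IsHyperbolicGroup (G : Type*) [Group G] : Prop :=
  ∃ S : Set G, S.Finite ∧ Subgroup.closure S = ⊤ ∧
    ∃ δ : ℝ, 0 ≤ δ ∧ ∀ w x y z : G,
      gromovProd S w x y ≥ min (gromovProd S w x z) (gromovProd S w y z) - δ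

/-!
Let `k` have infinite order. Within a coset `x⟨k⟩`, where `x` commutes with `k`, choose `x` of
minimal length. For `g = kⁿ` consider the quadrilateral with long sides `[1, x]` and `[g, gx]`.
Since `gx = xg`, both its short sides have length `|g|`, and by minimality its diagonals are at
least as long as its long sides. If `x` is long compared with `g`, hyperbolicity forces a point `y`
in the middle of a geodesic from `1` to `x` to satisfy `d(y, gy) ≤ 10δ`. Balls are finite, so this
cannot hold for too many powers `g` of `k` at once. Hence minimal coset representatives have bounded
length, so `⟨k⟩` has finite index in the centralizer of `k`, which contains the centralizer of every
subgroup through `k`.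
-/

open Filter Metric

section PseudoMetric

/-- Gromov's four-point condition with constant `δ`, written without a base point: multiplying
`(x|y)_w ≥ min (x|z)_w (y|z)_w - δ` by two and cancelling turns it into this symmetric form. -/
def IsFourPointHyperbolic (X : Type*) [PseudoMetricSpace X] (δ : ℝ) : Prop :=
  ∀ x y z w : X, dist x y + dist z w ≤ max (dist x z + dist y w) (dist x w + dist y z) + 2 * δ

/-- Points at integer distances along a geodesic exist between any two points, as in the vertex
set of a connected graph. -/
def IsDiscretelyGeodesic (X : Type*) [PseudoMetricSpace X] : Prop :=
  ∀ (x y : X) (n : ℕ), n ≤ dist x y → ∃ z, dist x z ≤ n ∧ dist z y ≤ dist x y - n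

variable {X : Type*} [PseudoMetricSpace X] {δ : ℝ}

theorem exists_mem_forall_dist_le {o : X} (hball : ∀ r, (closedBall o r).Finite) {s : Set X}
    (hs : s.Nonempty) : ∃ x ∈ s, ∀ y ∈ s, dist o x ≤ dist o y := by
  refine Tendsto.exists_within_forall_le hs (tendsto_atTop.2 fun r => ?_)
  refine (hball r).subset fun x (hx : ¬r ≤ dist o x) => ?_
  exact mem_closedBall'.2 (not_le.1 hx).le

theorem IsFourPointHyperbolic.nonneg [Nonempty X] (h : IsFourPointHyperbolic X δ) : 0 ≤ δ := by
  obtain ⟨x⟩ := ‹Nonempty X›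
  simpa using h x x x x

theorem IsFourPointHyperbolic.dist_le_of_quadrilateral (h : IsFourPointHyperbolic X δ)
    {p q p' q' y y' : X} {s t : ℝ} (hpq : dist p q = s + t) (hpq' : dist p' q' = s + t)
    (hdiag : s + t ≤ dist p q') (hdiag' : s + t ≤ dist p' q)
    (hp : dist p p' ≤ s) (hq : dist q q' ≤ t)
    (hpy : dist p y ≤ s) (hyq : dist y q ≤ t) (hpy' : dist p' y' ≤ s) (hyq' : dist y' q' ≤ t) :
    dist y y' ≤ 10 * δ := by
  have hδ : 0 ≤ δ := have : Nonempty X := ⟨p⟩; h.nonneg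
  have hs : 0 ≤ s := dist_nonneg.trans hpy
  have ht : 0 ≤ t := dist_nonneg.trans hyq
  rw [dist_comm] at hpy hpy'
  have diag_le : dist p q' ≤ s + t + 2 * δ := by
    have hmax : max (dist p q + dist q' p') (dist p p' + dist q' q) ≤ 2 * (s + t) :=
      max_le (by linarith [dist_comm p' q']) (by linarith [dist_comm q q'])
    linarith [h p q' q p', dist_comm p' q]
  have dist_y'_p : dist y' p ≤ s + 4 * δ := by
    have hmax : max (dist y' p' + dist p q') (dist y' q' + dist p p') ≤ 2 * s + t + 2 * δ :=
      max_le (by linarith) (by linarith)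
    linarith [h y' p p' q']
  have dist_y_q' : dist y q' ≤ t + 4 * δ := by
    have hmax : max (dist y p + dist q' q) (dist y q + dist q' p) ≤ s + 2 * t + 2 * δ :=
      max_le (by linarith [dist_comm q q']) (by linarith [dist_comm p q'])
    linarith [h y q' p q]
  have hmax : max (dist y p + dist y' q') (dist y q' + dist y' p) ≤ s + t + 8 * δ :=
    max_le (by linarith) (by linarith)
  linarith [h y y' p q']

end PseudoMetric

section SubgroupIndex

variable {G : Type*} [Group G]

theorem isCyclic_subgroupOf (H L : Subgroup G) [IsCyclic H] : IsCyclic (H.subgroupOf L) :=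
  isCyclic_of_injective (L.subtype.subgroupComap H) fun _ _ hab =>
    Subtype.ext (Subtype.ext (congrArg (fun h : H => (h : G)) hab))

theorem isFiniteRelIndex_of_forall_exists_mul_mem {H L : Subgroup G} {F : Set G} (hF : F.Finite)
    (h : ∀ x ∈ L, ∃ y ∈ H ⊓ L, x * y ∈ F) : H.IsFiniteRelIndex L := by
  rw [Subgroup.isFiniteRelIndex_iff_finiteIndex, Subgroup.finiteIndex_iff_finite_quotient]
  have hF' : ((↑) ⁻¹' F : Set L).Finite := hF.preimage Subtype.val_injective.injOn
  refine Set.finite_univ_iff.1 ((hF'.image (QuotientGroup.mk (s := H.subgroupOf L))).subset ?_)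
  rintro ⟨x⟩ -
  obtain ⟨y, ⟨hyH, hyL⟩, hxy⟩ := h x x.2
  exact ⟨x * ⟨y, hyL⟩, hxy, QuotientGroup.mk_mul_of_mem x hyH⟩

end SubgroupIndex

section LeftInvariantMetric

variable {G : Type*} [Group G] [PseudoMetricSpace G] [IsIsometricSMul G G] {k x y : G} {δ : ℝ}

theorem exists_forall_exists_lt_dist_pow_mul {r : ℝ}
    (hball : (closedBall (1 : G) r).Finite) (hk : ¬IsOfFinOrder k) :
    ∃ N : ℕ, ∀ y : G, ∃ n < N, r < dist y (k ^ n * y) := by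
  refine ⟨hball.toFinset.card + 1, fun y => ?_⟩
  by_contra! hclose
  have conj_mem : ∀ n ∈ Finset.range (hball.toFinset.card + 1),
      y⁻¹ * (k ^ n * y) ∈ hball.toFinset := fun n hn => by
    rw [Set.Finite.mem_toFinset, mem_closedBall', ← dist_mul_left y, mul_one,
      mul_inv_cancel_left]
    exact hclose n (Finset.mem_range.1 hn)
  obtain ⟨m, -, n, -, hne, heq⟩ :=
    Finset.exists_ne_map_eq_of_card_lt_of_maps_to (by simp) conj_mem
  exact hne (injective_pow_iff_not_isOfFinOrder.2 hk (by simpa using heq))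

theorem IsFourPointHyperbolic.dist_zpow_mul_le (h : IsFourPointHyperbolic G δ) (hkx : Commute k x)
    (hmin : ∀ n : ℤ, dist 1 x ≤ dist 1 (x * k ^ n)) {s t : ℝ} (hst : dist 1 x = s + t)
    (hys : dist 1 y ≤ s) (hyt : dist y x ≤ t) {n : ℤ} (hns : dist 1 (k ^ n) ≤ s)
    (hnt : dist 1 (k ^ n) ≤ t) : dist y (k ^ n * y) ≤ 10 * δ := by
  have hcomm (m : ℤ) : k ^ m * x = x * k ^ m := hkx.zpow_left m
  have dist_zpow (z : G) : dist (k ^ n) (k ^ n * z) = dist 1 z := by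
    simpa using dist_mul_left (k ^ n) 1 z
  refine h.dist_le_of_quadrilateral (p := 1) (q := x) (p' := k ^ n) (q' := k ^ n * x) hst
    ((dist_zpow x).trans hst) ?_ ?_ hns ?_ hys hyt ((dist_zpow y).trans_le hys) ?_
  · rw [← hst, hcomm]
    exact hmin n
  · have : dist (k ^ n) x = dist 1 (x * k ^ (-n)) := by
      rw [← hcomm, ← dist_zpow, zpow_neg, mul_inv_cancel_left]
    exact this ▸ hst ▸ hmin (-n)
  · rw [hcomm]
    simpa using (dist_mul_left x 1 (k ^ n)).trans_le hnt
  · rwa [dist_mul_left]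

theorem IsFourPointHyperbolic.exists_forall_dist_one_le (h : IsFourPointHyperbolic G δ)
    (hgeod : IsDiscretelyGeodesic G) (hball : ∀ r, (closedBall (1 : G) r).Finite)
    (hk : ¬IsOfFinOrder k) :
    ∃ R, ∀ x : G, Commute k x → (∀ n : ℤ, dist 1 x ≤ dist 1 (x * k ^ n)) → dist 1 x ≤ R := by
  obtain ⟨N, hN⟩ := exists_forall_exists_lt_dist_pow_mul (hball (10 * δ)) hk
  obtain ⟨M, hM⟩ := ((Finset.range N).image fun n => ⌈dist 1 (k ^ n)⌉₊).exists_le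
  have dist_pow_le : ∀ n < N, dist 1 (k ^ n) ≤ M := fun n hn =>
    Nat.ceil_le.1 (hM _ (Finset.mem_image_of_mem _ (Finset.mem_range.2 hn)))
  refine ⟨2 * M, fun x hkx hmin => ?_⟩
  by_contra! hlong
  obtain ⟨y, hy, hyx⟩ := hgeod 1 x M (by linarith [M.cast_nonneg (α := ℝ)])
  obtain ⟨n, hn, hfar⟩ := hN y
  refine hfar.not_ge ?_
  rw [← zpow_natCast]
  have hnM : dist 1 (k ^ (n : ℤ)) ≤ M := by simpa only [zpow_natCast] using dist_pow_le n hn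
  exact h.dist_zpow_mul_le hkx hmin (by ring) hy hyx hnM (by linarith)

theorem IsFourPointHyperbolic.isFiniteRelIndex_zpowers_centralizer
    (h : IsFourPointHyperbolic G δ) (hgeod : IsDiscretelyGeodesic G)
    (hball : ∀ r, (closedBall (1 : G) r).Finite) (hk : ¬IsOfFinOrder k) :
    (Subgroup.zpowers k).IsFiniteRelIndex (Subgroup.centralizer {k}) := by
  obtain ⟨R, hR⟩ := h.exists_forall_dist_one_le hgeod hball hk
  refine isFiniteRelIndex_of_forall_exists_mul_mem (hball R) fun x hx => ?_
  have hkx : Commute k x := (Subgroup.mem_centralizer_singleton_iff.1 hx).symm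
  obtain ⟨_, ⟨n, rfl⟩, hn⟩ :=
    exists_mem_forall_dist_le hball (Set.range_nonempty fun n : ℤ => x * k ^ n)
  have zpow_mem : k ^ n ∈ Subgroup.zpowers k ⊓ Subgroup.centralizer {k} :=
    ⟨Subgroup.zpow_mem_zpowers k n,
      Subgroup.mem_centralizer_singleton_iff.2 ((Commute.refl k).zpow_left n)⟩
  refine ⟨k ^ n, zpow_mem, ?_⟩
  rw [mem_closedBall']
  refine hR _ (hkx.mul_right ((Commute.refl k).zpow_right n)) fun m => hn _ ⟨n + m, ?_⟩
  simp only [zpow_add, mul_assoc]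

end LeftInvariantMetric

section WordMetric

variable {G : Type*} [Group G] {S : Set G} {l l' : List G}

/-- `l` is a word in the alphabet `S ∪ S⁻¹`. -/
def IsWordIn (S : Set G) (l : List G) : Prop := ∀ x ∈ l, x ∈ S ∨ x⁻¹ ∈ S

theorem IsWordIn.append (hl : IsWordIn S l) (hl' : IsWordIn S l') : IsWordIn S (l ++ l') :=
  List.forall_mem_append.2 ⟨hl, hl'⟩

theorem IsWordIn.reverse_map_inv (hl : IsWordIn S l) :
    IsWordIn S (l.map fun x => x⁻¹).reverse := by
  intro x hx
  obtain ⟨y, hy, rfl⟩ := List.mem_map.1 (List.mem_reverse.1 hx)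
  simpa [or_comm] using hl y hy

theorem wordDist_le_length (hl : IsWordIn S l) {g h : G} (hprod : l.prod = g⁻¹ * h) :
    wordDist S g h ≤ l.length :=
  csInf_le ⟨0, by rintro _ ⟨l, -, -, rfl⟩; positivity⟩ ⟨l, hl, hprod, rfl⟩

theorem wordDist_mul_left (S : Set G) (a g h : G) :
    wordDist S (a * g) (a * h) = wordDist S g h := by
  simp only [wordDist, mul_inv_rev, mul_assoc, inv_mul_cancel_left]

theorem exists_isWordIn_prod_eq (hS : Subgroup.closure S = ⊤) (g : G) :
    ∃ l, IsWordIn S l ∧ l.prod = g := by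
  have hg : g ∈ (Subgroup.closure S).toSubmonoid := hS ▸ Subgroup.mem_top g
  rw [Subgroup.closure_toSubmonoid] at hg
  exact Submonoid.exists_list_of_mem_closure hg

theorem exists_isWordIn_length_eq_wordDist (hS : Subgroup.closure S = ⊤) (g h : G) :
    ∃ l, IsWordIn S l ∧ l.prod = g⁻¹ * h ∧ wordDist S g h = l.length := by
  obtain ⟨l, ⟨hl, hprod⟩, hmin⟩ := exists_minimalFor_of_wellFoundedLT
    (fun l => IsWordIn S l ∧ l.prod = g⁻¹ * h) List.length (exists_isWordIn_prod_eq hS _)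
  refine ⟨l, hl, hprod, IsLeast.csInf_eq ⟨⟨l, hl, hprod, rfl⟩, ?_⟩⟩
  rintro _ ⟨l', hl', hprod', rfl⟩
  exact_mod_cast (le_total _ _).elim id (hmin ⟨hl', hprod'⟩)

theorem wordDist_self (S : Set G) (g : G) : wordDist S g g = 0 :=
  le_antisymm (by simpa using wordDist_le_length (S := S) (l := []) (by simp [IsWordIn]) (by simp))
    (Real.sInf_nonneg (by rintro _ ⟨l, -, -, rfl⟩; positivity))

theorem wordDist_comm_le (hS : Subgroup.closure S = ⊤) (g h : G) :
    wordDist S g h ≤ wordDist S h g := by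
  obtain ⟨l, hl, hprod, hlen⟩ := exists_isWordIn_length_eq_wordDist hS h g
  have := wordDist_le_length (g := g) (h := h) hl.reverse_map_inv
    (by rw [← List.prod_inv_reverse, hprod, mul_inv_rev, inv_inv])
  simpa [hlen] using this

theorem wordDist_triangle (hS : Subgroup.closure S = ⊤) (g h k : G) :
    wordDist S g k ≤ wordDist S g h + wordDist S h k := by
  obtain ⟨l, hl, hprod, hlen⟩ := exists_isWordIn_length_eq_wordDist hS g h
  obtain ⟨l', hl', hprod', hlen'⟩ := exists_isWordIn_length_eq_wordDist hS h k
  have := wordDist_le_length (g := g) (h := k) (hl.append hl') (by simp [hprod, hprod', mul_assoc])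
  simpa [hlen, hlen'] using this

/-- The group `G` as a pseudometric space under the word metric of a generating set `S`. -/
noncomputable abbrev wordPseudoMetricSpace (hS : Subgroup.closure S = ⊤) :
    PseudoMetricSpace G where
  dist := wordDist S
  dist_self := wordDist_self S
  dist_comm g h := le_antisymm (wordDist_comm_le hS g h) (wordDist_comm_le hS h g)
  dist_triangle := wordDist_triangle hS

theorem isIsometricSMul_wordPseudoMetricSpace (hS : Subgroup.closure S = ⊤) :
    letI := wordPseudoMetricSpace hS
    IsIsometricSMul G G :=
  letI := wordPseudoMetricSpace hS
  ⟨fun a => Isometry.of_dist_eq (wordDist_mul_left S a)⟩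

theorem isDiscretelyGeodesic_wordPseudoMetricSpace (hS : Subgroup.closure S = ⊤) :
    letI := wordPseudoMetricSpace hS
    IsDiscretelyGeodesic G := by
  intro g h n hn
  change (n : ℝ) ≤ wordDist S g h at hn
  change ∃ z, wordDist S g z ≤ n ∧ wordDist S z h ≤ wordDist S g h - n
  obtain ⟨l, hl, hprod, hlen⟩ := exists_isWordIn_length_eq_wordDist hS g h
  rw [hlen] at hn ⊢
  refine ⟨g * (l.take n).prod, ?_, ?_⟩
  · refine (wordDist_le_length (l := l.take n) (fun x hx => hl x (List.mem_of_mem_take hx))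
      (by simp)).trans ?_
    exact_mod_cast List.length_take_le n l
  · refine (wordDist_le_length (l := l.drop n) (fun x hx => hl x (List.mem_of_mem_drop hx))
      ?_).trans ?_
    · rw [mul_inv_rev, mul_assoc, ← hprod, ← List.prod_take_mul_prod_drop l n, inv_mul_cancel_left]
    · rw [List.length_drop, Nat.cast_sub (by exact_mod_cast hn)]

theorem finite_setOf_wordDist_one_le (hfin : S.Finite) (hS : Subgroup.closure S = ⊤) (r : ℝ) :
    {g : G | wordDist S 1 g ≤ r}.Finite := by
  have : Finite ↥(S ∪ S⁻¹) := (hfin.union hfin.inv).to_subtype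
  refine ((List.finite_length_le ↥(S ∪ S⁻¹) ⌊r⌋₊).image
    fun l => (l.map Subtype.val).prod).subset fun g hg => ?_
  obtain ⟨l, hl, hprod, hlen⟩ := exists_isWordIn_length_eq_wordDist hS 1 g
  have mem_union : ∀ x ∈ l, x ∈ S ∪ S⁻¹ := hl
  refine ⟨l.attachWith _ mem_union, ?_, by simpa using hprod⟩
  simpa using Nat.le_floor (hlen.symm.trans_le hg)

theorem isFourPointHyperbolic_wordPseudoMetricSpace (hS : Subgroup.closure S = ⊤) {δ : ℝ}
    (h : ∀ w x y z : G,
      gromovProd S w x y ≥ min (gromovProd S w x z) (gromovProd S w y z) - δ) :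
    letI := wordPseudoMetricSpace hS
    IsFourPointHyperbolic G δ := by
  intro x y z w
  change wordDist S x y + wordDist S z w ≤
    max (wordDist S x z + wordDist S y w) (wordDist S x w + wordDist S y z) + 2 * δ
  have hxyz := h w x y z
  simp only [gromovProd] at hxyz
  grind

end WordMetric

theorem IsHyperbolicGroup.isFiniteRelIndex_zpowers_centralizer {G : Type*} [Group G]
    (hG : IsHyperbolicGroup G) {k : G} (hk : ¬IsOfFinOrder k) :
    (Subgroup.zpowers k).IsFiniteRelIndex (Subgroup.centralizer {k}) := by
  obtain ⟨S, hfin, hS, δ, -, hδ⟩ := hG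
  let := wordPseudoMetricSpace hS
  have := isIsometricSMul_wordPseudoMetricSpace hS
  refine (isFourPointHyperbolic_wordPseudoMetricSpace hS hδ).isFiniteRelIndex_zpowers_centralizer
    (isDiscretelyGeodesic_wordPseudoMetricSpace hS) (fun r => ?_) hk
  exact (finite_setOf_wordDist_one_le hfin hS r).subset fun g hg => mem_closedBall'.1 hg

/-- In a hyperbolic group, the centralizer of a subgroup `K` which is not a torsion group
is virtually cyclic. -/
theorem stmt_7 {G : Type*} [Group G] (hG : IsHyperbolicGroup G)
    (K : Subgroup G) (hK : ∃ k ∈ K, ∀ n : ℤ, n ≠ 0 → k ^ n ≠ 1) :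
    ∃ H : Subgroup (Subgroup.centralizer (K : Set G)), H.FiniteIndex ∧ IsCyclic H := by
  obtain ⟨k, hkK, hk⟩ := hK
  have infinite_order : ¬IsOfFinOrder k := fun h =>
    have ⟨n, hn, hkn⟩ := isOfFinOrder_iff_zpow_eq_one.1 h
    hk n hn hkn
  have := hG.isFiniteRelIndex_zpowers_centralizer infinite_order
  have centralizer_le : Subgroup.centralizer (K : Set G) ≤ Subgroup.centralizer {k} :=
    Subgroup.centralizer_le (Set.singleton_subset_iff.2 hkK)
  have := Subgroup.isFiniteRelIndex_of_le_right (Subgroup.zpowers k) centralizer_le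
  exact ⟨(Subgroup.zpowers k).subgroupOf _, inferInstance, isCyclic_subgroupOf _ _⟩
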